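/- For every (a,c) ∈ k^× × k, the elements y^i x^j ⊗ z_{a,c}, i, j ∈ ℕ, form a k-basis of the Verma module M_{a,c}. -/

import Mathlib

open FreeAlgebra

/-- Generators of the double of the Jordan plane. -/
inductive JGen : Type
  | u | v | zeta | g | ginv | x | y

variable (k : Type) [Field k] [IsAlgClosed k] [CharZero k]

/-- The defining relations of the double of the Jordan plane. -/
inductive JRel : FreeAlgebra k JGen → FreeAlgebra k JGen → Prop
  | gginv : JRel (ι k .g * ι k .ginv) 1
  | ginvg : JRel (ι k .ginv * ι k .g) 1
  | zg : JRel (ι k .zeta * ι k .g) (ι k .g * ι k .zeta)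
  | gx : JRel (ι k .g * ι k .x) (ι k .x * ι k .g)
  | gy : JRel (ι k .g * ι k .y) (ι k .y * ι k .g + ι k .x * ι k .g)
  | zy : JRel (ι k .zeta * ι k .y) (ι k .y * ι k .zeta + ι k .y)
  | zx : JRel (ι k .zeta * ι k .x) (ι k .x * ι k .zeta + ι k .x)
  | ug : JRel (ι k .u * ι k .g) (ι k .g * ι k .u)
  | vg : JRel (ι k .v * ι k .g) (ι k .g * ι k .v + ι k .g * ι k .u)
  | vz : JRel (ι k .v * ι k .zeta) (ι k .zeta * ι k .v + ι k .v)
  | uz : JRel (ι k .u * ι k .zeta) (ι k .zeta * ι k .u + ι k .u)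
  | yx : JRel (ι k .y * ι k .x) (ι k .x * ι k .y - (1/2 : k) • (ι k .x * ι k .x))
  | vu : JRel (ι k .v * ι k .u) (ι k .u * ι k .v - (1/2 : k) • (ι k .u * ι k .u))
  | ux : JRel (ι k .u * ι k .x) (ι k .x * ι k .u)
  | vx : JRel (ι k .v * ι k .x) (ι k .x * ι k .v + (1 - ι k .g) + ι k .x * ι k .u)
  | uy : JRel (ι k .u * ι k .y) (ι k .y * ι k .u + (1 - ι k .g))
  | vy : JRel (ι k .v * ι k .y) (ι k .y * ι k .v - ι k .g * ι k .zeta + ι k .y * ι k .u)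

/-- The double of the Jordan plane, as the presented algebra. -/
def D : Type := RingQuot (JRel k)

noncomputable instance : Ring (D k) := inferInstanceAs (Ring (RingQuot (JRel k)))
noncomputable instance : Algebra k (D k) := inferInstanceAs (Algebra k (RingQuot (JRel k)))

/-- The canonical projection from the free algebra onto `D`. -/
noncomputable def Dmk : FreeAlgebra k JGen →ₐ[k] D k := RingQuot.mkAlgHom k (JRel k)

noncomputable def DU : D k := Dmk k (ι k .u)
noncomputable def DV : D k := Dmk k (ι k .v)
noncomputable def DZ : D k := Dmk k (ι k .zeta)
noncomputable def DG : D k := Dmk k (ι k .g)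
noncomputable def DGinv : D k := Dmk k (ι k .ginv)
noncomputable def DX : D k := Dmk k (ι k .x)
noncomputable def DY : D k := Dmk k (ι k .y)

set_option synthInstance.maxHeartbeats 1000000
set_option maxHeartbeats 2000000

/-- The left ideal of `D` generated by `g - a`, `ζ + c/2`, `u`, `v`. -/
noncomputable def MIdeal (a c : k) : Submodule (D k) (D k) :=
  Submodule.span (D k)
    {DG k - algebraMap k (D k) a, DZ k + algebraMap k (D k) (c / 2), DU k, DV k}

/-- The Verma module `M_{a,c} = D ⊗_{D^{≥0}} T_{a,c}`, realized as the quotient of `D` by the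
left ideal generated by `g - a`, `ζ + c/2`, `u`, `v` (the annihilator in `D^{≥0}` of the
generator `z_{a,c}` of `T_{a,c}`, on which `g` acts by `a`, `ζ` by `-c/2`, and `u`, `v` by `0`).
The class of `1` corresponds to `1 ⊗ z_{a,c}`. -/
noncomputable abbrev Mver (a c : k) : Type := (D k) ⧸ (MIdeal k a c)

/-- The class of `d ∈ D` in `M_{a,c}`. -/
noncomputable def mmk (a c : k) : D k → Mver k a c := Submodule.Quotient.mk

/-!
The proof realizes `M_{a,c}` on the Jordan plane `J = k⟨x, y⟩ / (yx - xy + x² / 2)`. On the space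
with basis the ordered monomials `y ^ i x ^ j`, left multiplication by `x` is defined by
straightening. As `J` is free of rank one over itself, operators for `g`, `ζ`, `u` and `v` are
determined by their values at `1` and by their commutation rules with `x` and `y`, and they exist
once these rules are compatible with the relation of `J`. The remaining relations of `D` hold since
they hold at `1` and are inherited by `x w` and `y w` from `w`. The resulting `D`-module maps to any
`D`-module with a highest weight vector for the same `(a, c)`, so it is `M_{a,c}`.
-/

/-- Elements `x`, `y` of an algebra satisfying the relation of the Jordan plane
`k⟨x, y⟩ / (yx - xy + x² / 2)`; equivalently, the images of its generators under an algebra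
homomorphism. In characteristic `2` the scalar `1 / 2` is `0`, and `x` and `y` commute. -/
def IsJordanPair (F : Type*) {R : Type*} [Field F] [Ring R] [Algebra F R] (x y : R) : Prop :=
  y * x = x * y - (1 / 2 : F) • (x * x)

namespace IsJordanPair

variable {F R W : Type*} [Field F] [Ring R] [Algebra F R] [AddCommGroup W] [Module F W]

theorem mul_pow_succ {x y : R} (h : IsJordanPair F x y) (n : ℕ) :
    x * y ^ (n + 1) = y ^ (n + 1) * x + ((n + 1 : F) / 2) • (x * y ^ n * x) := by
  have hxy : x * y = y * x + (1 / 2 : F) • (x * x) := by rw [h]; module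
  induction n with
  | zero => simp [hxy]
  | succ n ih =>
    calc x * y ^ (n + 1 + 1)
        = x * y ^ (n + 1) * y := by rw [pow_succ, mul_assoc]
      _ = y ^ (n + 1) * (x * y) + ((n + 1 : F) / 2) • (x * y ^ n * (x * y)) := by
          rw [ih, add_mul, smul_mul_assoc, mul_assoc, mul_assoc]
      _ = y ^ (n + 1 + 1) * x + ((n + 1 : F) / 2) • (x * y ^ (n + 1) * x)
            + (1 / 2 : F) • ((y ^ (n + 1) * x + ((n + 1 : F) / 2) • (x * y ^ n * x)) * x) := by
          simp only [hxy, mul_add, add_mul, mul_smul_comm, smul_mul_assoc, pow_succ, mul_assoc]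
          module
      _ = y ^ (n + 1 + 1) * x + (((n + 1 : ℕ) + 1 : F) / 2) • (x * y ^ (n + 1) * x) := by
          rw [← ih]
          push_cast
          module

theorem apply {A B : Module.End F W} (h : IsJordanPair F A B) (w : W) :
    B (A w) = A (B w) - (1 / 2 : F) • A (A w) :=
  LinearMap.congr_fun h w

theorem of_apply {A B : Module.End F W}
    (h : ∀ w, B (A w) = A (B w) - (1 / 2 : F) • A (A w)) : IsJordanPair F A B :=
  LinearMap.ext h

end IsJordanPair

/-- The underlying space of the Jordan plane, with `Finsupp.single (i, j) 1` standing for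
`y ^ i * x ^ j`. It carries the left multiplications by `x` and `y`, and its product is not
needed. -/
abbrev JordanPlane (F : Type*) [Field F] : Type _ := ℕ × ℕ →₀ F

namespace JordanPlane

variable {F W : Type*} [Field F] [AddCommGroup W] [Module F W]

/-- The ordered monomial `y ^ i * x ^ j` of the Jordan plane. -/
noncomputable def monomial (i j : ℕ) : JordanPlane F := Finsupp.single (i, j) 1

/-- The product `x * (y ^ i * x ^ j)` in terms of ordered monomials. The recursion is
`x y ^ (i + 1) = y ^ (i + 1) x + (i + 1) / 2 • x y ^ i x`, see `IsJordanPair.mul_pow_succ`. -/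
noncomputable def xMulMonomial : ℕ → ℕ → JordanPlane F
  | 0, j => monomial 0 (j + 1)
  | i + 1, j => monomial (i + 1) (j + 1) + ((i + 1 : F) / 2) • xMulMonomial i (j + 1)

/-- Left multiplication by `x` on the Jordan plane. -/
noncomputable def mulX : Module.End F (JordanPlane F) :=
  Finsupp.linearCombination F fun p => xMulMonomial p.1 p.2

/-- Left multiplication by `y` on the Jordan plane. -/
noncomputable def mulY : Module.End F (JordanPlane F) :=
  Finsupp.linearCombination F fun p => monomial (p.1 + 1) p.2

theorem mulX_monomial_zero (j : ℕ) :
    mulX (monomial 0 j : JordanPlane F) = monomial 0 (j + 1) := by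
  simp [mulX, monomial, xMulMonomial]

theorem mulX_monomial_succ (i j : ℕ) :
    mulX (monomial (i + 1) j : JordanPlane F) =
      monomial (i + 1) (j + 1) + ((i + 1 : F) / 2) • mulX (monomial i (j + 1)) := by
  simp [mulX, monomial, xMulMonomial]

theorem mulY_monomial (i j : ℕ) :
    mulY (monomial i j : JordanPlane F) = monomial (i + 1) j := by
  simp [mulY, monomial]

theorem linearMap_ext {P Q : JordanPlane F →ₗ[F] W}
    (h : ∀ i j, P (monomial i j) = Q (monomial i j)) : P = Q :=
  Finsupp.lhom_ext' fun p => LinearMap.ext_ring (h p.1 p.2)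

theorem mulX_mulY_monomial (i j : ℕ) :
    mulX (mulY (monomial i j : JordanPlane F)) =
      mulY (mulX (monomial i j)) + (1 / 2 : F) • mulX (mulX (monomial i j)) := by
  induction i generalizing j with
  | zero => simp [mulY_monomial, mulX_monomial_zero, mulX_monomial_succ]
  | succ i ih =>
    have ih' := ih (j + 1)
    rw [mulY_monomial] at ih'
    rw [mulY_monomial, mulX_monomial_succ (i + 1), mulX_monomial_succ i j]
    simp only [map_add, map_smul, mulY_monomial, ih']
    push_cast
    module

theorem isJordanPair_mulX_mulY : IsJordanPair F (mulX (F := F)) mulY := by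
  refine linearMap_ext fun i j => ?_
  simp only [Module.End.mul_apply, LinearMap.sub_apply, LinearMap.smul_apply, mulX_mulY_monomial]
  module

theorem mulY_mulX (w : JordanPlane F) :
    mulY (mulX w) = mulX (mulY w) - (1 / 2 : F) • mulX (mulX w) :=
  isJordanPair_mulX_mulY.apply w

theorem mulX_pow_one (j : ℕ) : (mulX ^ j) (monomial 0 0 : JordanPlane F) = monomial 0 j := by
  induction j with
  | zero => rfl
  | succ j ih => rw [pow_succ', Module.End.mul_apply, ih, mulX_monomial_zero]

theorem mulY_pow_monomial_zero (i j : ℕ) :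
    (mulY ^ i) (monomial 0 j : JordanPlane F) = monomial i j := by
  induction i with
  | zero => rfl
  | succ i ih => rw [pow_succ', Module.End.mul_apply, ih, mulY_monomial]

theorem apply_eq_of_generators {P Q : JordanPlane F →ₗ[F] W}
    (one : P (monomial 0 0) = Q (monomial 0 0))
    (x_mul : ∀ w, P w = Q w → P (mulX w) = Q (mulX w))
    (y_mul : ∀ w, P w = Q w → P (mulY w) = Q (mulY w)) (w : JordanPlane F) : P w = Q w := by
  refine LinearMap.congr_fun (linearMap_ext fun i j => ?_) w
  induction i with
  | zero =>
    induction j with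
    | zero => exact one
    | succ j ih => simpa only [mulX_monomial_zero] using x_mul _ ih
  | succ i ih => simpa only [mulY_monomial] using y_mul _ ih

/-- The map from the Jordan plane, as the free module of rank one over itself, to `W` that sends
the unit to `w₀`, where `x` and `y` act on `W` by `A` and `B`. -/
noncomputable def lift (A B : Module.End F W) (w₀ : W) : JordanPlane F →ₗ[F] W :=
  Finsupp.linearCombination F fun p => (B ^ p.1 * A ^ p.2) w₀

section lift

variable {A B : Module.End F W} (w₀ : W)

theorem lift_monomial (i j : ℕ) : lift A B w₀ (monomial i j) = (B ^ i * A ^ j) w₀ := by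
  simp [lift, monomial]

theorem lift_one : lift A B w₀ (monomial 0 0) = w₀ := lift_monomial w₀ 0 0

theorem lift_mulY (w : JordanPlane F) : lift A B w₀ (mulY w) = B (lift A B w₀ w) := by
  refine LinearMap.congr_fun
    (linearMap_ext (P := lift A B w₀ ∘ₗ mulY) (Q := B ∘ₗ lift A B w₀) fun i j => ?_) w
  simp only [LinearMap.comp_apply, mulY_monomial, lift_monomial, pow_succ', Module.End.mul_apply]

theorem lift_mulX (h : IsJordanPair F A B) (w : JordanPlane F) :
    lift A B w₀ (mulX w) = A (lift A B w₀ w) := by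
  refine LinearMap.congr_fun
    (linearMap_ext (P := lift A B w₀ ∘ₗ mulX) (Q := A ∘ₗ lift A B w₀) fun i j => ?_) w
  simp only [LinearMap.comp_apply]
  induction i generalizing j with
  | zero => simp only [mulX_monomial_zero, lift_monomial, pow_zero, one_mul, pow_succ',
      Module.End.mul_apply]
  | succ i ih =>
    have hpow := LinearMap.congr_fun (h.mul_pow_succ i) ((A ^ j) w₀)
    simp only [LinearMap.add_apply, LinearMap.smul_apply, Module.End.mul_apply] at hpow
    simp only [mulX_monomial_succ, map_add, map_smul, ih, lift_monomial, Module.End.mul_apply,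
      hpow, pow_succ' A]

end lift

/-- The endomorphism `(v, w) ↦ (T v, A w + C v)` of `V × W`. -/
def lowerBlock {V : Type*} [AddCommGroup V] [Module F V]
    (T : Module.End F V) (A : Module.End F W) (C : V →ₗ[F] W) : Module.End F (V × W) :=
  (T ∘ₗ LinearMap.fst F V W).prod (A ∘ₗ LinearMap.snd F V W + C ∘ₗ LinearMap.fst F V W)

theorem lowerBlock_apply {V : Type*} [AddCommGroup V] [Module F V] (T : Module.End F V)
    (A : Module.End F W) (C : V →ₗ[F] W) (p : V × W) :
    lowerBlock T A C p = (T p.1, A p.2 + C p.1) := rfl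

/-- The compatibility of `Cx` and `Cy` with the relation of the Jordan plane, under which a map
`P` with `P (x w) = A (P w) + Cx w` and `P (y w) = B (P w) + Cy w` can exist. -/
def IsSkewCocycle (A B : Module.End F W) (Cx Cy : JordanPlane F →ₗ[F] W) : Prop :=
  ∀ w, B (Cx w) + Cy (mulX w) =
    A (Cy w) + Cx (mulY w) - (1 / 2 : F) • (A (Cx w) + Cx (mulX w))

/-- The map `P : JordanPlane F → W` with `P 1 = w₀`, `P (x w) = A (P w) + Cx w` and
`P (y w) = B (P w) + Cy w`. Its graph is a map to `JordanPlane F × W`, on which `x` and `y` act by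
lower block triangular operators. -/
noncomputable def skewLift (A B : Module.End F W) (Cx Cy : JordanPlane F →ₗ[F] W) (w₀ : W) :
    JordanPlane F →ₗ[F] W :=
  LinearMap.snd F _ W ∘ₗ
    lift (lowerBlock mulX A Cx) (lowerBlock mulY B Cy) (monomial 0 0, w₀)

section skewLift

variable {A B : Module.End F W} {Cx Cy : JordanPlane F →ₗ[F] W} (w₀ : W)

theorem isJordanPair_lowerBlock (h : IsJordanPair F A B) (hC : IsSkewCocycle A B Cx Cy) :
    IsJordanPair F (lowerBlock mulX A Cx) (lowerBlock mulY B Cy) := by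
  refine .of_apply fun ⟨v, w⟩ => Prod.ext (mulY_mulX v) ?_
  have hCv : Cy (mulX v) = A (Cy v) + Cx (mulY v) - (1 / 2 : F) • (A (Cx v) + Cx (mulX v))
      - B (Cx v) := eq_sub_of_add_eq' (hC v)
  simp only [lowerBlock_apply, Prod.snd_sub, Prod.smul_snd, map_add, h.apply, hCv]
  module

theorem fst_lift_lowerBlock (h : IsJordanPair F A B) (hC : IsSkewCocycle A B Cx Cy)
    (w : JordanPlane F) :
    (lift (lowerBlock mulX A Cx) (lowerBlock mulY B Cy) (monomial 0 0, w₀) w).1 = w := by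
  refine apply_eq_of_generators (P := LinearMap.fst F _ W ∘ₗ lift _ _ (monomial 0 0, w₀))
    (Q := LinearMap.id) ?_ (fun w ih => ?_) (fun w ih => ?_) w
  · exact congrArg Prod.fst (lift_one _)
  · simp only [LinearMap.comp_apply, lift_mulX _ (isJordanPair_lowerBlock h hC)]
    exact congrArg mulX ih
  · simp only [LinearMap.comp_apply, lift_mulY]
    exact congrArg mulY ih

theorem skewLift_one : skewLift A B Cx Cy w₀ (monomial 0 0) = w₀ :=
  congrArg Prod.snd (lift_one _)

theorem skewLift_mulX (h : IsJordanPair F A B) (hC : IsSkewCocycle A B Cx Cy)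
    (w : JordanPlane F) :
    skewLift A B Cx Cy w₀ (mulX w) = A (skewLift A B Cx Cy w₀ w) + Cx w := by
  simp only [skewLift, LinearMap.comp_apply, LinearMap.snd_apply,
    lift_mulX _ (isJordanPair_lowerBlock h hC), lowerBlock_apply, fst_lift_lowerBlock w₀ h hC]

theorem skewLift_mulY (h : IsJordanPair F A B) (hC : IsSkewCocycle A B Cx Cy)
    (w : JordanPlane F) :
    skewLift A B Cx Cy w₀ (mulY w) = B (skewLift A B Cx Cy w₀ w) + Cy w := by
  simp only [skewLift, LinearMap.comp_apply, LinearMap.snd_apply, lift_mulY, lowerBlock_apply,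
    fst_lift_lowerBlock w₀ h hC]

end skewLift

end JordanPlane

namespace VermaModel

open JordanPlane

variable {F : Type*} [Field F]

/-- The automorphism `x ↦ x`, `y ↦ y + t x` of the Jordan plane, multiplied by the scalar `b`. -/
noncomputable def shear (t b : F) : Module.End F (JordanPlane F) :=
  lift mulX (mulY + t • mulX) (b • monomial 0 0)

theorem isJordanPair_shear (t : F) : IsJordanPair F (mulX (F := F)) (mulY + t • mulX) := by
  refine .of_apply fun w => ?_
  simp only [LinearMap.add_apply, LinearMap.smul_apply, map_add, map_smul, mulY_mulX]
  module

theorem shear_one (t b : F) : shear t b (monomial 0 0) = b • monomial 0 0 := lift_one _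

theorem shear_mulX (t b : F) (w : JordanPlane F) : shear t b (mulX w) = mulX (shear t b w) :=
  lift_mulX _ (isJordanPair_shear t) w

theorem shear_mulY (t b : F) (w : JordanPlane F) :
    shear t b (mulY w) = mulY (shear t b w) + t • mulX (shear t b w) :=
  lift_mulY _ w

theorem shear_neg_inv_shear (t : F) {b : F} (hb : b ≠ 0) (w : JordanPlane F) :
    shear (-t) b⁻¹ (shear t b w) = w := by
  refine apply_eq_of_generators (P := shear (-t) b⁻¹ ∘ₗ shear t b) (Q := LinearMap.id)
    ?_ (fun w ih => ?_) (fun w ih => ?_) w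
  · simp [shear_one, smul_smul, hb]
  · simp_all [shear_mulX]
  · simp_all [shear_mulX, shear_mulY]

/-- The action of `g` on the model of `M_{a,c}`. -/
noncomputable def actG (a : F) : Module.End F (JordanPlane F) := shear 1 a

/-- The action of `g⁻¹` on the model of `M_{a,c}`, for `a ≠ 0`. -/
noncomputable def actGinv (a : F) : Module.End F (JordanPlane F) := shear (-1) a⁻¹

/-- The action of `ζ` on the model of `M_{a,c}`: the Euler derivation, shifted by `-c / 2`. -/
noncomputable def actZ (c : F) : Module.End F (JordanPlane F) :=
  skewLift mulX mulY mulX mulY (-(c / 2) • monomial 0 0)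

/-- The action of `u` on the model of `M_{a,c}`, determined by `ux = xu`, `uy = yu + (1 - g)` and
`u z = 0`. -/
noncomputable def actU (a : F) : Module.End F (JordanPlane F) :=
  skewLift mulX mulY 0 (1 - actG a) 0

/-- The action of `v` on the model of `M_{a,c}`, determined by `vx = xv + (1 - g) + xu`,
`vy = yv - gζ + yu` and `v z = 0`. -/
noncomputable def actV (a c : F) : Module.End F (JordanPlane F) :=
  skewLift mulX mulY (1 - actG a + mulX * actU a) (mulY * actU a - actG a * actZ c) 0

variable (a c : F) (w : JordanPlane F)

theorem actG_one : actG a (monomial 0 0) = a • monomial 0 0 := shear_one 1 a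

theorem actG_mulX : actG a (mulX w) = mulX (actG a w) := shear_mulX 1 a w

theorem actG_mulY : actG a (mulY w) = mulY (actG a w) + mulX (actG a w) := by
  simpa only [one_smul] using! shear_mulY 1 a w

theorem actGinv_actG {a : F} (ha : a ≠ 0) : actGinv a (actG a w) = w :=
  shear_neg_inv_shear 1 ha w

theorem actG_actGinv {a : F} (ha : a ≠ 0) : actG a (actGinv a w) = w := by
  simpa only [neg_neg, inv_inv] using! shear_neg_inv_shear (-1) (inv_ne_zero ha) w

theorem isSkewCocycle_actZ : IsSkewCocycle (F := F) mulX mulY mulX mulY := fun w => by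
  rw [mulY_mulX]
  module

theorem actZ_one : actZ c (monomial 0 0) = -(c / 2) • monomial 0 0 := skewLift_one _

theorem actZ_mulX : actZ c (mulX w) = mulX (actZ c w) + mulX w :=
  skewLift_mulX _ isJordanPair_mulX_mulY isSkewCocycle_actZ w

theorem actZ_mulY : actZ c (mulY w) = mulY (actZ c w) + mulY w :=
  skewLift_mulY _ isJordanPair_mulX_mulY isSkewCocycle_actZ w

theorem isSkewCocycle_actU : IsSkewCocycle mulX mulY 0 (1 - actG a) := fun w => by
  simp [actG_mulX]

theorem actU_one : actU a (monomial 0 0) = 0 := skewLift_one _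

theorem actU_mulX : actU a (mulX w) = mulX (actU a w) := by
  simpa only [LinearMap.zero_apply, add_zero] using!
    skewLift_mulX 0 isJordanPair_mulX_mulY (isSkewCocycle_actU a) w

theorem actU_mulY : actU a (mulY w) = mulY (actU a w) + (w - actG a w) :=
  skewLift_mulY 0 isJordanPair_mulX_mulY (isSkewCocycle_actU a) w

theorem actZ_actG : actZ c (actG a w) = actG a (actZ c w) := by
  refine apply_eq_of_generators (P := actZ c * actG a) (Q := actG a * actZ c)
    ?_ (fun w ih => ?_) (fun w ih => ?_) w <;> simp only [Module.End.mul_apply] at *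
  · simp only [actG_one, actZ_one, map_smul, smul_comm a]
  · simp only [actG_mulX, actZ_mulX, map_add, ih]
  · simp only [actG_mulY, actZ_mulX, actZ_mulY, map_add, ih]
    module

theorem actU_actG : actU a (actG a w) = actG a (actU a w) := by
  refine apply_eq_of_generators (P := actU a * actG a) (Q := actG a * actU a)
    ?_ (fun w ih => ?_) (fun w ih => ?_) w <;> simp only [Module.End.mul_apply] at *
  · simp only [actG_one, actU_one, map_smul, map_zero, smul_zero]
  · simp only [actG_mulX, actU_mulX, ih]
  · simp only [actG_mulY, actU_mulX, actU_mulY, map_add, map_sub, ih]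
    module

theorem actU_actZ : actU a (actZ c w) = actZ c (actU a w) + actU a w := by
  refine apply_eq_of_generators (P := actU a * actZ c) (Q := actZ c * actU a + actU a)
    ?_ (fun w ih => ?_) (fun w ih => ?_) w <;>
    simp only [Module.End.mul_apply, LinearMap.add_apply] at *
  · simp only [actZ_one, actU_one, map_smul, map_zero, smul_zero, add_zero]
  · simp only [actZ_mulX, actU_mulX, map_add, ih]
  · simp only [actZ_mulY, actU_mulY, map_add, map_sub, ih, actZ_actG]

theorem actV_one : actV a c (monomial 0 0) = 0 := skewLift_one _

variable [NeZero (2 : F)]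

theorem isSkewCocycle_actV :
    IsSkewCocycle mulX mulY (1 - actG a + mulX * actU a) (mulY * actU a - actG a * actZ c) :=
  fun w => by
  simp only [LinearMap.add_apply, LinearMap.sub_apply, Module.End.one_apply,
    Module.End.mul_apply, map_add, map_sub, actU_mulX, actU_mulY, actG_mulX, actG_mulY, actZ_mulX,
    mulY_mulX]
  match_scalars <;> field_simp <;> ring

theorem actV_mulX :
    actV a c (mulX w) = mulX (actV a c w) + (w - actG a w) + mulX (actU a w) := by
  rw [add_assoc]
  exact skewLift_mulX 0 isJordanPair_mulX_mulY (isSkewCocycle_actV a c) w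

theorem actV_mulY :
    actV a c (mulY w) = mulY (actV a c w) - actG a (actZ c w) + mulY (actU a w) := by
  rw [sub_add_eq_add_sub, add_sub_assoc]
  exact skewLift_mulY 0 isJordanPair_mulX_mulY (isSkewCocycle_actV a c) w

theorem actV_actG : actV a c (actG a w) = actG a (actV a c w) + actG a (actU a w) := by
  refine apply_eq_of_generators (P := actV a c * actG a) (Q := actG a * actV a c + actG a * actU a)
    ?_ (fun w ih => ?_) (fun w ih => ?_) w <;>
    simp only [Module.End.mul_apply, LinearMap.add_apply] at *
  · simp only [actG_one, actU_one, actV_one, map_smul, map_zero, smul_zero, add_zero]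
  · simp only [actG_mulX, actU_mulX, actV_mulX, actU_actG, map_add, map_sub, ih]
    module
  · simp only [actG_mulY, actU_mulY, actV_mulX, actV_mulY, actU_actG, actZ_actG,
      map_add, map_sub, ih]
    module

theorem actV_actZ : actV a c (actZ c w) = actZ c (actV a c w) + actV a c w := by
  refine apply_eq_of_generators (P := actV a c * actZ c) (Q := actZ c * actV a c + actV a c)
    ?_ (fun w ih => ?_) (fun w ih => ?_) w <;>
    simp only [Module.End.mul_apply, LinearMap.add_apply] at *
  · simp only [actZ_one, actV_one, map_smul, map_zero, smul_zero, add_zero]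
  · simp only [actZ_mulX, actV_mulX, actU_actZ, actZ_actG, map_add, map_sub, ih]
  · simp only [actZ_mulY, actV_mulY, actU_actZ, actZ_actG, map_add, map_sub, ih]

theorem actV_actU :
    actV a c (actU a w) = actU a (actV a c w) - (1 / 2 : F) • actU a (actU a w) := by
  refine apply_eq_of_generators (P := actV a c * actU a)
    (Q := actU a * actV a c - (1 / 2 : F) • (actU a * actU a))
    ?_ (fun w ih => ?_) (fun w ih => ?_) w <;>
    simp only [Module.End.mul_apply, LinearMap.sub_apply, LinearMap.smul_apply] at *
  · simp only [actU_one, actV_one, map_zero, smul_zero, sub_zero]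
  · simp only [actU_mulX, actV_mulX, actU_actG, map_add, map_sub, map_smul, ih]
    match_scalars <;> field_simp
    ring
  · simp only [actU_mulY, actV_mulY, actU_actG, actU_actZ, actV_actG, map_add, map_sub, map_smul,
      ih]
    match_scalars <;> field_simp <;> ring

end VermaModel

namespace D

variable {F : Type} [Field F]

/-- The algebra homomorphism out of `D` given by images of the generators that satisfy the
defining relations. -/
noncomputable def lift {R : Type*} [Ring R] [Algebra F R] (f : JGen → R)
    (h : ∀ ⦃p q⦄, JRel F p q → FreeAlgebra.lift F f p = FreeAlgebra.lift F f q) : D F →ₐ[F] R :=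
  RingQuot.liftAlgHom F ⟨FreeAlgebra.lift F f, h⟩

theorem lift_Dmk_ι {R : Type*} [Ring R] [Algebra F R] (f : JGen → R)
    (h : ∀ ⦃p q⦄, JRel F p q → FreeAlgebra.lift F f p = FreeAlgebra.lift F f q) (s : JGen) :
    lift f h (Dmk F (ι F s)) = f s :=
  (RingQuot.liftAlgHom_mkAlgHom_apply F _ h (ι F s)).trans (FreeAlgebra.lift_ι_apply f s)

theorem induction {motive : D F → Prop} (algebraMap : ∀ r, motive (algebraMap F (D F) r))
    (generator : ∀ s, motive (Dmk F (ι F s)))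
    (mul : ∀ d e, motive d → motive e → motive (d * e))
    (add : ∀ d e, motive d → motive e → motive (d + e)) (d : D F) : motive d := by
  obtain ⟨p, rfl⟩ := RingQuot.mkAlgHom_surjective F (JRel F) d
  change motive (Dmk F p)
  induction p using FreeAlgebra.induction with
  | grade0 r => rw [AlgHom.commutes]; exact algebraMap r
  | grade1 s => exact generator s
  | mul p q hp hq => rw [map_mul]; exact mul _ _ hp hq
  | add p q hp hq => rw [map_add]; exact add _ _ hp hq

end D

section relations

variable {F : Type} [Field F]

theorem Dmk_eq_of_rel {p q : FreeAlgebra F JGen} (h : JRel F p q) : Dmk F p = Dmk F q :=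
  RingQuot.mkAlgHom_rel F h

theorem DGinv_mul_DG : DGinv F * DG F = 1 := by
  simpa only [map_mul, map_one] using! Dmk_eq_of_rel (F := F) .ginvg

theorem DG_mul_DX : DG F * DX F = DX F * DG F := by
  simpa only [map_mul] using! Dmk_eq_of_rel (F := F) .gx

theorem DG_mul_DY : DG F * DY F = DY F * DG F + DX F * DG F := by
  simpa only [map_mul, map_add] using! Dmk_eq_of_rel (F := F) .gy

theorem DZ_mul_DX : DZ F * DX F = DX F * DZ F + DX F := by
  simpa only [map_mul, map_add] using! Dmk_eq_of_rel (F := F) .zx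

theorem DZ_mul_DY : DZ F * DY F = DY F * DZ F + DY F := by
  simpa only [map_mul, map_add] using! Dmk_eq_of_rel (F := F) .zy

theorem isJordanPair_DX_DY : IsJordanPair F (DX F) (DY F) := by
  simpa only [map_mul, map_sub, map_smul] using! Dmk_eq_of_rel (F := F) .yx

theorem DU_mul_DX : DU F * DX F = DX F * DU F := by
  simpa only [map_mul] using! Dmk_eq_of_rel (F := F) .ux

theorem DU_mul_DY : DU F * DY F = DY F * DU F + (1 - DG F) := by
  simpa only [map_mul, map_add, map_sub, map_one] using! Dmk_eq_of_rel (F := F) .uy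

theorem DV_mul_DX : DV F * DX F = DX F * DV F + (1 - DG F) + DX F * DU F := by
  simpa only [map_mul, map_add, map_sub, map_one] using! Dmk_eq_of_rel (F := F) .vx

theorem DV_mul_DY : DV F * DY F = DY F * DV F - DG F * DZ F + DY F * DU F := by
  simpa only [map_mul, map_add, map_sub] using! Dmk_eq_of_rel (F := F) .vy

end relations

namespace VermaModel

open JordanPlane

variable {F : Type} [Field F]

/-- The operators by which the generators of `D` act on the model of `M_{a,c}`. -/
noncomputable def generatorAction (a c : F) : JGen → Module.End F (JordanPlane F)
  | .u => actU a
  | .v => actV a c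
  | .zeta => actZ c
  | .g => actG a
  | .ginv => actGinv a
  | .x => mulX
  | .y => mulY

theorem generatorAction_rel [NeZero (2 : F)] {a : F} (ha : a ≠ 0) (c : F)
    ⦃p q : FreeAlgebra F JGen⦄ (h : JRel F p q) :
    FreeAlgebra.lift F (generatorAction a c) p = FreeAlgebra.lift F (generatorAction a c) q := by
  refine LinearMap.ext fun w => ?_
  cases h <;>
    simp only [map_mul, map_add, map_sub, map_smul, map_one, FreeAlgebra.lift_ι_apply,
      generatorAction, Module.End.mul_apply, LinearMap.add_apply, LinearMap.sub_apply,
      LinearMap.smul_apply, Module.End.one_apply]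
  case gginv => exact actG_actGinv w ha
  case ginvg => exact actGinv_actG w ha
  case zg => exact actZ_actG a c w
  case gx => exact actG_mulX a w
  case gy => exact actG_mulY a w
  case zy => exact actZ_mulY c w
  case zx => exact actZ_mulX c w
  case ug => exact actU_actG a w
  case vg => exact actV_actG a c w
  case vz => exact actV_actZ a c w
  case uz => exact actU_actZ a c w
  case yx => exact mulY_mulX w
  case vu => exact actV_actU a c w
  case ux => exact actU_mulX a w
  case vx => exact actV_mulX a c w
  case uy => exact actU_mulY a w
  case vy => exact actV_mulY a c w

/-- The representation of `D` on the Jordan plane that models `M_{a,c}`, with highest weight vector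
`monomial 0 0`. -/
noncomputable def rep [NeZero (2 : F)] {a : F} (ha : a ≠ 0) (c : F) :
    D F →ₐ[F] Module.End F (JordanPlane F) :=
  D.lift (generatorAction a c) (generatorAction_rel ha c)

theorem rep_generator [NeZero (2 : F)] {a : F} (ha : a ≠ 0) (c : F) (s : JGen) :
    rep ha c (Dmk F (ι F s)) = generatorAction a c s :=
  D.lift_Dmk_ι _ _ s

end VermaModel

/-- A vector on which `D^{≥0}` acts as on the generator `z_{a,c}` of `T_{a,c}`. -/
structure IsHighestWeight {F : Type} {M : Type*} [Field F] [AddCommGroup M] [Module F M]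
    [Module (D F) M] (a c : F) (m : M) : Prop where
  g_smul : DG F • m = a • m
  zeta_smul : DZ F • m = -(c / 2) • m
  u_smul : DU F • m = 0
  v_smul : DV F • m = 0

namespace VermaModel

open JordanPlane

variable {F : Type} {M : Type*} [Field F] [AddCommGroup M] [Module F M] [Module (D F) M]
  [IsScalarTower F (D F) M]

/-- The map from the model of `M_{a,c}` to a `D`-module given by `y ^ i * x ^ j ↦ y ^ i x ^ j m`. It
is `D`-linear if `m` is a highest weight vector, see `ofVector_rep`. -/
noncomputable def ofVector (m : M) : JordanPlane F →ₗ[F] M :=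
  JordanPlane.lift (Algebra.lsmul F F M (DX F)) (Algebra.lsmul F F M (DY F)) m

theorem ofVector_monomial (m : M) (i j : ℕ) :
    ofVector m (monomial i j : JordanPlane F) = (DY F ^ i * DX F ^ j) • m := by
  simp only [ofVector, lift_monomial, ← map_pow, ← map_mul, Algebra.lsmul_coe]

theorem ofVector_one (m : M) : ofVector m (monomial 0 0 : JordanPlane F) = m := lift_one m

theorem ofVector_mulX (m : M) (w : JordanPlane F) :
    ofVector m (mulX w) = DX F • ofVector m w := by
  refine lift_mulX m ?_ w
  simpa only [map_mul, map_sub, map_smul] using!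
    congrArg (Algebra.lsmul F F M) (isJordanPair_DX_DY (F := F))

theorem ofVector_mulY (m : M) (w : JordanPlane F) :
    ofVector m (mulY w) = DY F • ofVector m w :=
  lift_mulY m w

theorem ofVector_apply_eq_smul {m : M} {d : D F} {T : Module.End F (JordanPlane F)}
    (one : ofVector m (T (monomial 0 0)) = d • m)
    (x_mul : ∀ w, ofVector m (T w) = d • ofVector m w →
      ofVector m (T (mulX w)) = (d * DX F) • ofVector m w)
    (y_mul : ∀ w, ofVector m (T w) = d • ofVector m w →
      ofVector m (T (mulY w)) = (d * DY F) • ofVector m w) (w : JordanPlane F) :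
    ofVector m (T w) = d • ofVector m w := by
  refine apply_eq_of_generators (P := ofVector m ∘ₗ T)
    (Q := Algebra.lsmul F F M d ∘ₗ ofVector m) ?_ (fun w ih => ?_) (fun w ih => ?_) w
  · simpa only [LinearMap.comp_apply, Algebra.lsmul_coe, ofVector_one] using one
  · simpa only [LinearMap.comp_apply, Algebra.lsmul_coe, ofVector_mulX, mul_smul] using x_mul w ih
  · simpa only [LinearMap.comp_apply, Algebra.lsmul_coe, ofVector_mulY, mul_smul] using y_mul w ih

variable {a c : F} {m : M}

theorem ofVector_actG (hm : IsHighestWeight a c m) (w : JordanPlane F) :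
    ofVector m (actG a w) = DG F • ofVector m w := by
  refine ofVector_apply_eq_smul ?_ (fun w ih => ?_) (fun w ih => ?_) w
  · rw [actG_one, map_smul, ofVector_one, hm.g_smul]
  · rw [actG_mulX, ofVector_mulX, ih, DG_mul_DX, mul_smul]
  · rw [actG_mulY, map_add, ofVector_mulX, ofVector_mulY, ih, DG_mul_DY, add_smul, mul_smul,
      mul_smul]

theorem ofVector_actGinv (hm : IsHighestWeight a c m) (ha : a ≠ 0) (w : JordanPlane F) :
    ofVector m (actGinv a w) = DGinv F • ofVector m w := by
  rw [← one_smul (D F) (ofVector m (actGinv a w)), ← DGinv_mul_DG, mul_smul,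
    ← ofVector_actG hm, actG_actGinv w ha]

theorem ofVector_actZ (hm : IsHighestWeight a c m) (w : JordanPlane F) :
    ofVector m (actZ c w) = DZ F • ofVector m w := by
  refine ofVector_apply_eq_smul ?_ (fun w ih => ?_) (fun w ih => ?_) w
  · rw [actZ_one, map_smul, ofVector_one, hm.zeta_smul]
  · rw [actZ_mulX, map_add, ofVector_mulX, ofVector_mulX, ih, DZ_mul_DX, add_smul, mul_smul]
  · rw [actZ_mulY, map_add, ofVector_mulY, ofVector_mulY, ih, DZ_mul_DY, add_smul, mul_smul]

theorem ofVector_actU (hm : IsHighestWeight a c m) (w : JordanPlane F) :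
    ofVector m (actU a w) = DU F • ofVector m w := by
  refine ofVector_apply_eq_smul ?_ (fun w ih => ?_) (fun w ih => ?_) w
  · rw [actU_one, map_zero, hm.u_smul]
  · rw [actU_mulX, ofVector_mulX, ih, DU_mul_DX, mul_smul]
  · rw [actU_mulY, map_add, map_sub, ofVector_mulY, ih, ofVector_actG hm, DU_mul_DY, add_smul,
      mul_smul, sub_smul, one_smul]

theorem ofVector_actV [NeZero (2 : F)] (hm : IsHighestWeight a c m) (w : JordanPlane F) :
    ofVector m (actV a c w) = DV F • ofVector m w := by
  refine ofVector_apply_eq_smul ?_ (fun w ih => ?_) (fun w ih => ?_) w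
  · rw [actV_one, map_zero, hm.v_smul]
  · simp only [actV_mulX, map_add, map_sub, ofVector_mulX, ih, ofVector_actG hm,
      ofVector_actU hm, DV_mul_DX, add_smul, sub_smul, mul_smul, one_smul]
  · simp only [actV_mulY, map_add, map_sub, ofVector_mulY, ih, ofVector_actG hm,
      ofVector_actZ hm, ofVector_actU hm, DV_mul_DY, add_smul, sub_smul, mul_smul]

theorem ofVector_rep [NeZero (2 : F)] (hm : IsHighestWeight a c m) (ha : a ≠ 0) (d : D F)
    (w : JordanPlane F) : ofVector m (rep ha c d w) = d • ofVector m w := by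
  induction d using D.induction generalizing w with
  | algebraMap r =>
    rw [AlgHom.commutes, Module.algebraMap_end_apply, map_smul, algebraMap_smul]
  | generator s =>
    rw [rep_generator]
    cases s
    case u => exact ofVector_actU hm w
    case v => exact ofVector_actV hm w
    case zeta => exact ofVector_actZ hm w
    case g => exact ofVector_actG hm w
    case ginv => exact ofVector_actGinv hm ha w
    case x => exact ofVector_mulX m w
    case y => exact ofVector_mulY m w
  | mul d e hd he => rw [map_mul, Module.End.mul_apply, hd, he, mul_smul]
  | add d e hd he => rw [map_add, LinearMap.add_apply, map_add, hd, he, add_smul]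

end VermaModel

namespace Mver

open JordanPlane VermaModel

variable {F : Type} [Field F]

theorem smul_mmk (a c : F) (d e : D F) : d • mmk F a c e = mmk F a c (d * e) := rfl

theorem smul_mmk_one_eq_zero {a c : F} {d : D F} (hd : d ∈ MIdeal F a c) :
    d • mmk F a c 1 = 0 := by
  rw [smul_mmk, mul_one]
  exact (Submodule.Quotient.mk_eq_zero _).2 hd

theorem isHighestWeight_mmk_one (a c : F) : IsHighestWeight a c (mmk F a c 1) where
  g_smul := by
    have h : (DG F - algebraMap F (D F) a) • mmk F a c 1 = 0 :=
      smul_mmk_one_eq_zero (Submodule.subset_span (by simp))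
    rwa [sub_smul, algebraMap_smul, sub_eq_zero] at h
  zeta_smul := by
    have h : (DZ F + algebraMap F (D F) (c / 2)) • mmk F a c 1 = 0 :=
      smul_mmk_one_eq_zero (Submodule.subset_span (by simp))
    rwa [add_smul, algebraMap_smul, add_eq_zero_iff_eq_neg, ← neg_smul] at h
  u_smul := smul_mmk_one_eq_zero (Submodule.subset_span (by simp))
  v_smul := smul_mmk_one_eq_zero (Submodule.subset_span (by simp))

theorem ofVector_mmk_one_monomial (a c : F) (i j : ℕ) :
    ofVector (mmk F a c 1) (monomial i j : JordanPlane F) = mmk F a c (DY F ^ i * DX F ^ j) := by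
  rw [ofVector_monomial, smul_mmk, mul_one]

variable [NeZero (2 : F)] {a : F} (ha : a ≠ 0) (c : F)

theorem rep_apply_one_eq_zero {d : D F} (hd : d ∈ MIdeal F a c) :
    rep ha c d (monomial 0 0) = 0 := by
  rw [MIdeal] at hd
  induction hd using Submodule.span_induction with
  | mem d hd =>
    rcases hd with rfl | rfl | rfl | rfl
    · rw [map_sub, LinearMap.sub_apply, AlgHom.commutes, Module.algebraMap_end_apply, DG,
        rep_generator, generatorAction, actG_one, sub_self]
    · rw [map_add, LinearMap.add_apply, AlgHom.commutes, Module.algebraMap_end_apply, DZ,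
        rep_generator, generatorAction, actZ_one, neg_smul, neg_add_cancel]
    · rw [DU, rep_generator, generatorAction, actU_one]
    · rw [DV, rep_generator, generatorAction, actV_one]
  | zero => rw [map_zero, LinearMap.zero_apply]
  | add d e _ _ hd he => rw [map_add, LinearMap.add_apply, hd, he, add_zero]
  | smul d e _ he => rw [smul_eq_mul, map_mul, Module.End.mul_apply, he, map_zero]

/-- The map from `M_{a,c}` to its model that sends the class of `d` to `d` applied to the highest
weight vector. -/
noncomputable def toModel : Mver F a c →ₗ[F] JordanPlane F :=
  ((MIdeal F a c).restrictScalars F).liftQ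
    (LinearMap.applyₗ (monomial 0 0) ∘ₗ (rep ha c).toLinearMap)
    fun _ hd => rep_apply_one_eq_zero ha c hd

theorem toModel_mmk (d : D F) : toModel ha c (mmk F a c d) = rep ha c d (monomial 0 0) := rfl

theorem rep_pow_mul_pow_apply_one (i j : ℕ) :
    rep ha c (DY F ^ i * DX F ^ j) (monomial 0 0) = monomial i j := by
  rw [map_mul, map_pow, map_pow, DX, DY, rep_generator, rep_generator, Module.End.mul_apply]
  exact (congrArg (mulY ^ i) (mulX_pow_one j)).trans (mulY_pow_monomial_zero i j)

/-- `M_{a,c}` is isomorphic to its model. -/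
noncomputable def equivModel : Mver F a c ≃ₗ[F] JordanPlane F :=
  .ofLinearMap (toModel ha c) (ofVector (mmk F a c 1))
    (linearMap_ext fun i j => by
      rw [LinearMap.comp_apply, ofVector_mmk_one_monomial, toModel_mmk, rep_pow_mul_pow_apply_one,
        LinearMap.id_apply])
    (LinearMap.ext fun m => by
      obtain ⟨d, rfl⟩ : ∃ d, mmk F a c d = m := Submodule.Quotient.mk_surjective _ m
      rw [LinearMap.comp_apply, toModel_mmk, ofVector_rep (isHighestWeight_mmk_one a c),
        ofVector_one, smul_mmk, mul_one, LinearMap.id_apply])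

/-- The basis of `M_{a,c}` formed by the classes of `y ^ i * x ^ j`. -/
noncomputable def basis : Module.Basis (ℕ × ℕ) F (Mver F a c) := .ofRepr (equivModel ha c)

theorem coe_basis : ⇑(basis ha c) = fun p => mmk F a c (DY F ^ p.1 * DX F ^ p.2) :=
  funext fun p => ofVector_mmk_one_monomial a c p.1 p.2

end Mver

theorem basis_Verma_general {F : Type} [Field F] [NeZero (2 : F)] (a c : F) (ha : a ≠ 0) :
    LinearIndependent F (fun p : ℕ × ℕ => mmk F a c (DY F ^ p.1 * DX F ^ p.2)) ∧
      Submodule.span F (Set.range fun p : ℕ × ℕ => mmk F a c (DY F ^ p.1 * DX F ^ p.2)) = ⊤ := by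
  rw [← Mver.coe_basis ha c]
  exact ⟨(Mver.basis ha c).linearIndependent, (Mver.basis ha c).span_eq⟩

/-- the elements `y^i x^j ⊗ z_{a,c}`, `i, j ∈ ℕ`, form a `k`-basis of the Verma
module `M_{a,c}`. -/
theorem basis_Verma (a c : k) (ha : a ≠ 0) :
    LinearIndependent k (fun p : ℕ × ℕ => mmk k a c ((DY k) ^ p.1 * (DX k) ^ p.2)) ∧
      Submodule.span k
        (Set.range fun p : ℕ × ℕ => mmk k a c ((DY k) ^ p.1 * (DX k) ^ p.2)) = ⊤ :=
  basis_Verma_general a c ha
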